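/- Let G be the group presented by the generating set S and relation set R of Theorem 2.14 (the presentation of the virtual Thompson group VF) as described in the context. Then G is torsion-free: every element g ∈ G with gⁿ = 1 for some integer n ≥ 1 satisfies g = 1. -/

import Mathlib

/-- The alphabet Σ = {x, v}. -/
inductive Letter : Type
  | x | v
deriving DecidableEq

/-- Words on Σ (possibly empty). -/
abbrev Word := List Letter

/-- A target word t ∈ {xx, xv, vx, vv}, encoded as the pair of its two letters. -/
abbrev Tgt := Letter × Letter

/-- The word (of length two) corresponding to a target. -/
def tw (t : Tgt) : Word := [t.1, t.2]

/-- Index for the three generators of family (i): X_{v→vv}, X_{v→vx}, X_{v→xv}. -/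
inductive G1 : Type
  | vv   -- X_{v→vv}
  | vx   -- X_{v→vx}
  | xv   -- X_{v→xv}
deriving DecidableEq

/-- Index for the four kinds of generators of family (iii):
X_{x→vv,u}, X_{x→vx,u}, X_{v→xx,u}, X_{v→xv,u}. -/
inductive G3 : Type
  | xvv  -- X_{x→vv,u}
  | xvx  -- X_{x→vx,u}
  | vxx  -- X_{v→xx,u}
  | vxv  -- X_{v→xv,u}
deriving DecidableEq

/-- The generating set S of the presentation of the virtual Thompson group VF. -/
inductive Gen : Type
  /-- family (i): X_{v→vv}, X_{v→vx}, X_{v→xv} -/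
  | fam1 : G1 → Gen
  /-- family (ii): X_{a, s→t, u} with a ∈ {x,v}, s ∈ {x,v}, t ∈ {xx,xv,vx,vv}, u any word -/
  | fam2 : Letter → Letter → Tgt → Word → Gen
  /-- family (iii): X_{c, u} with c one of x→vv, x→vx, v→xx, v→xv and u a nonempty word -/
  | fam3 : G3 → {u : Word // u ≠ []} → Gen

/-- The corresponding generator of the free group on S. -/
def X (g : Gen) : FreeGroup Gen := FreeGroup.of g

open Letter in
/-- The relators of the presentation of VF (each relation A·B = C·D becomes the
relator A·B·(C·D)⁻¹). -/
inductive VFRel : FreeGroup Gen → Prop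
  /-- (R1) and (R2): for a ∈ {x, v},
  X_{a,s₁→t₁, p s₂ q} X_{a,s₂→t₂, q} = X_{a,s₂→t₂, q} X_{a,s₁→t₁, p t₂ q}. -/
  | r12 (a s₁ s₂ : Letter) (t₁ t₂ : Tgt) (p q : Word) :
      VFRel (X (.fam2 a s₁ t₁ (p ++ [s₂] ++ q)) * X (.fam2 a s₂ t₂ q) *
        (X (.fam2 a s₂ t₂ q) * X (.fam2 a s₁ t₁ (p ++ tw t₂ ++ q)))⁻¹)
  /-- (R3): X_{x,s→t,q} X_{x→vv, p t q} = X_{x→vv, p s q} X_{v,s→t,q}. -/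
  | r3 (s : Letter) (t : Tgt) (p q : Word) :
      VFRel (X (.fam2 x s t q) * X (.fam3 .xvv ⟨p ++ tw t ++ q, by simp [tw]⟩) *
        (X (.fam3 .xvv ⟨p ++ [s] ++ q, by simp⟩) * X (.fam2 v s t q))⁻¹)
  /-- (R4): X_{x,s→t,q} X_{x→vx, p t q} = X_{x→vx, p s q} X_{v,s→t,q}. -/
  | r4 (s : Letter) (t : Tgt) (p q : Word) :
      VFRel (X (.fam2 x s t q) * X (.fam3 .xvx ⟨p ++ tw t ++ q, by simp [tw]⟩) *
        (X (.fam3 .xvx ⟨p ++ [s] ++ q, by simp⟩) * X (.fam2 v s t q))⁻¹)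
  /-- (R5): X_{v,s→t,q} X_{v→xx, p t q} = X_{v→xx, p s q} X_{x,s→t,q}. -/
  | r5 (s : Letter) (t : Tgt) (p q : Word) :
      VFRel (X (.fam2 v s t q) * X (.fam3 .vxx ⟨p ++ tw t ++ q, by simp [tw]⟩) *
        (X (.fam3 .vxx ⟨p ++ [s] ++ q, by simp⟩) * X (.fam2 x s t q))⁻¹)
  /-- (R6): X_{v,s→t,q} X_{v→xv, p t q} = X_{v→xv, p s q} X_{x,s→t,q}. -/
  | r6 (s : Letter) (t : Tgt) (p q : Word) :
      VFRel (X (.fam2 v s t q) * X (.fam3 .vxv ⟨p ++ tw t ++ q, by simp [tw]⟩) *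
        (X (.fam3 .vxv ⟨p ++ [s] ++ q, by simp⟩) * X (.fam2 x s t q))⁻¹)

/-- The set of relators. -/
def VFrels : Set (FreeGroup Gen) := {g | VFRel g}

/-- The virtual Thompson group VF, as the presented group ⟨S | R⟩. -/
abbrev VF := PresentedGroup VFrels

/-!
Consider the graph on nonempty words with an edge for every rewriting `s → t` of one letter. Filling
in the squares formed by rewritings of two different letters leaves `VF` as the fundamental group:
the label of an edge depends only on the first letter, when that is not the one rewritten, and on
the right context, and the labels along a spanning tree are trivial. Conjugating by paths that turn
all letters into `x` makes the label depend on the right context only through its length. Thus `VF`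
is a retract of a group with Thompson-like relations `g_m h_{n+1} = h_n g_m` for `m < n`, whose
generators carry a colour besides their index.

Writing each active generator as a stable letter times a generator of Thompson's group `F` makes
this coloured group a retract of a semidirect product of a right-angled Artin group by `F`. Being
torsion-free passes to semidirect products and subgroups. It holds for `F`, which acts faithfully on
`ℚ` by order automorphisms, and for right-angled Artin groups by adding one vertex at a time: the
new vertex is a stable letter of a split extension whose kernel is a free group.
-/

/-! ### Right-angled Artin groups and split extensions -/

/-- Torsion-freeness of a possibly noncommutative group. Mathlib's `IsMulTorsionFree` asks for
uniqueness of roots, which is stronger and does not pass to semidirect products. -/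
def TorsionFree (G : Type*) [Group G] : Prop :=
  ∀ g : G, IsOfFinOrder g → g = 1

namespace TorsionFree

variable {G H : Type*} [Group G] [Group H]

theorem of_isMulTorsionFree [IsMulTorsionFree G] : TorsionFree G :=
  fun _ hg => hg.eq_one'

theorem of_injective {i : G →* H} (hi : Function.Injective i) (hH : TorsionFree H) :
    TorsionFree G :=
  fun _ hg => (map_eq_one_iff i hi).1 (hH _ (i.isOfFinOrder hg))

theorem of_retract {i : G →* H} {r : H →* G} (hri : r.comp i = .id G) (hH : TorsionFree H) :
    TorsionFree G :=
  of_injective (Function.LeftInverse.injective (DFunLike.congr_fun hri)) hH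

theorem eq_one_of_mem_range (hG : TorsionFree G) {i : G →* H} (hi : Function.Injective i) {h : H}
    (hh : IsOfFinOrder h) (hmem : h ∈ i.range) : h = 1 := by
  obtain ⟨g, rfl⟩ := hmem
  rw [hG g (hi.isOfFinOrder_iff.1 hh), map_one]

theorem semidirectProduct {φ : H →* MulAut G} (hG : TorsionFree G) (hH : TorsionFree H) :
    TorsionFree (G ⋊[φ] H) := by
  intro g hg
  refine hG.eq_one_of_mem_range SemidirectProduct.inl_injective hg ?_
  rw [SemidirectProduct.range_inl_eq_ker_rightHom, MonoidHom.mem_ker]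
  exact hH _ (SemidirectProduct.rightHom.isOfFinOrder hg)

theorem orderIso (α : Type*) [LinearOrder α] : TorsionFree (α ≃o α) := by
  intro f hf
  obtain ⟨n, hn, hfn⟩ := isOfFinOrder_iff_pow_eq_one.1 hf
  ext a
  have hiter : f^[n] a = id^[n] a := by
    rw [Function.iterate_id]
    exact (smul_iterate_apply f n a).trans (by rw [hfn, one_smul, id])
  exact ((Function.Commute.id_right (f := f)).iterate_pos_eq_iff_map_eq f.monotone strictMono_id
    hn).1 hiter

end TorsionFree

/-- The relators `a x a⁻¹ y⁻¹`, in the form `(a x) (y a)⁻¹`, for all triples with `T a x y`. -/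
def wirtingerRels {α : Type*} (T : α → α → α → Prop) : Set (FreeGroup α) :=
  {r | ∃ a x y, T a x y ∧
    r = FreeGroup.of a * FreeGroup.of x * (FreeGroup.of y * FreeGroup.of a)⁻¹}

/-- The group given by a Wirtinger presentation: `T a x y` imposes that the generator `a`
conjugates the generator `x` to the generator `y`. -/
abbrev WirtingerGroup {α : Type*} (T : α → α → α → Prop) :=
  PresentedGroup (wirtingerRels T)

namespace WirtingerGroup

variable {α M : Type*} [Group M] {T : α → α → α → Prop}

theorem semiconjBy_of {a x y : α} (h : T a x y) :
    SemiconjBy (PresentedGroup.of a : WirtingerGroup T) (.of x) (.of y) :=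
  PresentedGroup.mk_eq_mk_of_mul_inv_mem ⟨a, x, y, h, rfl⟩

/-- The homomorphism out of a Wirtinger group with prescribed values on the generators. -/
def lift (f : α → M) (hf : ∀ a x y, T a x y → SemiconjBy (f a) (f x) (f y)) :
    WirtingerGroup T →* M :=
  PresentedGroup.toGroup (f := f) <| by
    rintro _ ⟨a, x, y, h, rfl⟩
    simp only [map_mul, map_inv, FreeGroup.lift_apply_of]
    exact mul_inv_eq_one.2 (hf a x y h)

@[simp]
theorem lift_of (f : α → M) (hf : ∀ a x y, T a x y → SemiconjBy (f a) (f x) (f y)) (a : α) :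
    lift f hf (.of a) = f a :=
  PresentedGroup.toGroup.of _

end WirtingerGroup

/-- The right-angled Artin group on the vertex set `V`, in which adjacent generators commute.
The adjacency relation need not be symmetric or irreflexive. -/
abbrev Raag {V : Type*} (C : V → V → Prop) :=
  WirtingerGroup fun a b b' => C a b ∧ b = b'

namespace Raag

variable {V W M : Type*} [Group M] {C : V → V → Prop}

theorem commute_of {a b : V} (h : C a b) : Commute (PresentedGroup.of a : Raag C) (.of b) :=
  WirtingerGroup.semiconjBy_of ⟨h, rfl⟩

/-- The homomorphism out of a right-angled Artin group with prescribed values on the generators. -/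
def lift (f : V → M) (hf : ∀ a b, C a b → Commute (f a) (f b)) : Raag C →* M :=
  WirtingerGroup.lift f <| by
    rintro a b _ ⟨h, rfl⟩
    exact hf a b h

@[simp]
theorem lift_of (f : V → M) (hf : ∀ a b, C a b → Commute (f a) (f b)) (a : V) :
    lift f hf (.of a) = f a :=
  WirtingerGroup.lift_of ..

/-- The homomorphism induced by a map of vertices preserving adjacency. -/
def map {D : W → W → Prop} (f : V → W) (hf : ∀ a b, C a b → D (f a) (f b)) : Raag C →* Raag D :=
  lift (fun a => .of (f a)) fun a b h => commute_of (hf a b h)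

@[simp]
theorem map_of {D : W → W → Prop} (f : V → W) (hf : ∀ a b, C a b → D (f a) (f b)) (a : V) :
    map (D := D) f hf (.of a) = .of (f a) :=
  lift_of ..

theorem map_map {U : Type*} {D : W → W → Prop} {E : U → U → Prop} (f : V → W)
    (hf : ∀ a b, C a b → D (f a) (f b)) (g : W → U) (hg : ∀ a b, D a b → E (g a) (g b))
    (w : Raag C) :
    map (D := E) g hg (map f hf w) = map (g ∘ f) (fun a b h => hg _ _ (hf a b h)) w :=
  DFunLike.congr_fun (f := (map g hg).comp (map f hf)) (PresentedGroup.ext fun a => by simp) w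

/-- An action of `G` on the vertices by graph automorphisms acts on the right-angled Artin group. -/
def autOfAction {G : Type*} [Group G] [MulAction G V]
    (hC : ∀ (g : G) a b, C a b → C (g • a) (g • b)) : G →* MulAut (Raag C) :=
  letI : MulDistribMulAction G (Raag C) :=
    { smul g := map (g • ·) (hC g)
      one_smul := DFunLike.congr_fun (f := map _ (hC 1)) (g := .id _) <|
        PresentedGroup.ext fun a => by simp
      mul_smul g h := DFunLike.congr_fun (f := map _ (hC (g * h)))
        (g := (map _ (hC g)).comp (map _ (hC h))) <| PresentedGroup.ext fun a => by simp [mul_smul]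
      smul_mul g := map_mul (map _ (hC g))
      smul_one g := map_one (map _ (hC g)) }
  MulDistribMulAction.toMulAut G (Raag C)

@[simp]
theorem autOfAction_of {G : Type*} [Group G] [MulAction G V]
    (hC : ∀ (g : G) a b, C a b → C (g • a) (g • b)) (g : G) (a : V) :
    autOfAction hC g (.of a) = .of (g • a) :=
  map_of (g • ·) (hC g) a

theorem torsionFree_of_forall_not_adj (hC : ∀ a b, ¬ C a b) : TorsionFree (Raag C) := by
  have hri : (FreeGroup.lift PresentedGroup.of).comp
      (lift FreeGroup.of fun a b h => (hC a b h).elim) = .id (Raag C) :=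
    PresentedGroup.ext fun a => by simp
  exact .of_retract hri .of_isMulTorsionFree

theorem map_injective {f : V → W} (hf : Function.Injective f) (D : W → W → Prop) :
    Function.Injective (map f fun _ _ => id : Raag (InvImage D f) →* Raag D) := by
  let v : W → Raag (InvImage D f) := Function.extend f .of 1
  have hv : ∀ a b, D a b → Commute (v a) (v b) := by
    intro a b h
    by_cases ha : ∃ a', f a' = a
    · by_cases hb : ∃ b', f b' = b
      · obtain ⟨a, rfl⟩ := ha
        obtain ⟨b, rfl⟩ := hb
        simpa only [v, hf.extend_apply] using commute_of (C := InvImage D f) h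
      · simp [v, Function.extend_apply' _ _ _ hb]
    · simp [v, Function.extend_apply' _ _ _ ha]
  have hri : (lift v hv).comp (map f fun _ _ => id) = .id (Raag (InvImage D f)) :=
    PresentedGroup.ext fun a => by
      rw [MonoidHom.comp_apply, map_of, lift_of]
      exact hf.extend_apply ..
  exact Function.LeftInverse.injective (DFunLike.congr_fun hri)

end Raag

section SplitExtension

variable {B J : Type*} [Group B]

namespace UniversalAction

/-- Identifies `(a * b, j)` with `(a, j')` whenever `b` is required to move `j` to `j'`. -/
inductive Step (E : B → J → J → Prop) : B × J → B × J → Prop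
  | intro (a : B) {b : B} {j j' : J} (h : E b j j') : Step E (a * b, j) (a, j')

end UniversalAction

/-- The universal `B`-set generated by points `j : J` subject to `b • j = j'` whenever
`E b j j'`; the pair `(a, j)` represents `a • j`. -/
def UniversalAction (E : B → J → J → Prop) := Quot (UniversalAction.Step E)

namespace UniversalAction

variable {E : B → J → J → Prop}

instance : MulAction B (UniversalAction E) where
  smul b := Quot.map (Prod.map (b * ·) id) <| by
    rintro _ _ ⟨a, h⟩
    rw [Prod.map_apply, ← mul_assoc]
    exact .intro (b * a) h
  one_smul := by
    rintro ⟨a, j⟩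
    exact congrArg (fun c => Quot.mk _ (c, j)) (one_mul a)
  mul_smul b c := by
    rintro ⟨a, j⟩
    exact congrArg (fun c => Quot.mk _ (c, j)) (mul_assoc b c a)

/-- The generating point `j`. -/
def mk (j : J) : UniversalAction E := Quot.mk _ (1, j)

theorem smul_mk_eq_mk {b : B} {j j' : J} (h : E b j j') :
    b • (mk j : UniversalAction E) = mk j' := by
  refine (congrArg (fun c => Quot.mk _ (c, j)) ?_).trans (Quot.sound (.intro 1 h))
  exact (mul_one b).trans (one_mul b).symm

/-- The equivariant map to a set with `B`-action, with prescribed values on generating points. -/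
def lift {Ω : Type*} [MulAction B Ω] (f : J → Ω) (hf : ∀ b j j', E b j j' → b • f j = f j') :
    UniversalAction E →[B] Ω where
  toFun := Quot.lift (fun w => w.1 • f w.2) <| by
    rintro _ _ ⟨a, h⟩
    rw [mul_smul, hf _ _ _ h]
  map_smul' b := by
    rintro ⟨a, j⟩
    exact mul_smul b a (f j)

@[simp]
theorem lift_mk {Ω : Type*} [MulAction B Ω] (f : J → Ω)
    (hf : ∀ b j j', E b j j' → b • f j = f j') (j : J) : lift f hf (mk j) = f j :=
  one_smul B (f j)

end UniversalAction

/-- The `B`-invariant relation on the universal `B`-set generated by the relation `C` on its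
generating points. -/
inductive UniversalAction.Adj (E : B → J → J → Prop) (C : J → J → Prop) :
    UniversalAction E → UniversalAction E → Prop
  | intro (b : B) {j j' : J} (h : C j j') : Adj E C (b • mk j) (b • mk j')

namespace UniversalAction.Adj

variable {E : B → J → J → Prop} {C : J → J → Prop}

theorem smul (b : B) (w w' : UniversalAction E) : Adj E C w w' → Adj E C (b • w) (b • w') := by
  rintro ⟨a, h⟩
  simpa only [mul_smul] using intro (E := E) (b * a) h

end UniversalAction.Adj

/-- The universal group generated by `B` and stable letters `j : J` such that `b` conjugates `j` to
`j'` whenever `E b j j'`, and `j`, `j'` commute whenever `C j j'`. It is the semidirect product by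
`B` of the right-angled Artin group on the universal `B`-set. -/
abbrev SplitExtension (E : B → J → J → Prop) (C : J → J → Prop) :=
  Raag (UniversalAction.Adj E C) ⋊[Raag.autOfAction UniversalAction.Adj.smul] B

namespace SplitExtension

variable {E : B → J → J → Prop} {C : J → J → Prop}

/-- The inclusion of the base group. -/
def base : B →* SplitExtension E C := SemidirectProduct.inr

/-- The stable letter `j`. -/
def stable (j : J) : SplitExtension E C :=
  SemidirectProduct.inl (.of (UniversalAction.mk j))

theorem semiconjBy_stable {b : B} {j j' : J} (h : E b j j') :
    SemiconjBy (base b : SplitExtension E C) (stable j) (stable j') := by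
  rw [SemiconjBy, ← mul_inv_eq_iff_eq_mul, ← map_inv]
  refine (SemidirectProduct.inl_aut b _).symm.trans ?_
  rw [Raag.autOfAction_of, UniversalAction.smul_mk_eq_mk h, stable]

theorem commute_stable {j j' : J} (h : C j j') :
    Commute (stable j : SplitExtension E C) (stable j') := by
  have hadj := UniversalAction.Adj.intro (E := E) 1 h
  rw [one_smul, one_smul] at hadj
  exact (Raag.commute_of hadj).map SemidirectProduct.inl

theorem torsionFree (hB : TorsionFree B) (hR : TorsionFree (Raag (UniversalAction.Adj E C))) :
    TorsionFree (SplitExtension E C) :=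
  hR.semidirectProduct hB

variable {M : Type*} [Group M] (φ : B →* M) (ψ : J → M)
  (hE : ∀ b j j', E b j j' → SemiconjBy (φ b) (ψ j) (ψ j'))
  (hC : ∀ j j', C j j' → Commute (ψ j) (ψ j'))

/-- The homomorphism out of a universal split extension with prescribed restriction to the base
and prescribed values on the stable letters. -/
def lift : SplitExtension E C →* M :=
  letI : MulAction B M := MulAction.compHom M ((MulAut.conj : M →* MulAut M).comp φ)
  let f : UniversalAction E →[B] M := UniversalAction.lift ψ fun b j j' h =>
    mul_inv_eq_of_eq_mul (hE b j j' h)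
  SemidirectProduct.lift
    (Raag.lift f <| by
      rintro _ _ ⟨b, h⟩
      have hf (j : J) : f (.mk j) = ψ j := UniversalAction.lift_mk ψ _ j
      rw [map_smul, map_smul, hf, hf]
      exact (hC _ _ h).map (MulAut.conj (φ b)))
    φ
    fun b => PresentedGroup.ext fun w => by
      simp only [MonoidHom.comp_apply, MulEquiv.coe_toMonoidHom, Raag.autOfAction_of,
        Raag.lift_of, map_smul]
      rfl

@[simp]
theorem lift_base (b : B) : lift φ ψ hE hC (base b) = φ b := by
  rw [lift, base, SemidirectProduct.lift_inr]

@[simp]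
theorem lift_stable (j : J) : lift φ ψ hE hC (stable j) = ψ j := by
  let : MulAction B M := MulAction.compHom M ((MulAut.conj : M →* MulAut M).comp φ)
  rw [lift, stable, SemidirectProduct.lift_inl, Raag.lift_of]
  exact UniversalAction.lift_mk ψ _ j

end SplitExtension

end SplitExtension

namespace Raag

/-- Adding a vertex amounts to adjoining a stable letter commuting with the adjacent generators. -/
theorem torsionFree_option {V : Type*} {C : Option V → Option V → Prop}
    (hV : TorsionFree (Raag (InvImage C some))) : TorsionFree (Raag C) := by
  let E (b : Raag (InvImage C some)) (_ _ : Unit) : Prop :=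
    ∃ a, b = .of a ∧ (C (some a) none ∨ C none (some a))
  let T := SplitExtension E fun _ _ => False
  have hT : TorsionFree T := by
    refine SplitExtension.torsionFree hV (torsionFree_of_forall_not_adj ?_)
    rintro _ _ ⟨_, h⟩
    exact h
  let i : Raag C →* T :=
    lift (fun a => a.elim (SplitExtension.stable ()) fun a => SplitExtension.base (.of a)) <| by
      rintro (_ | a) (_ | b) h
      · exact .refl _
      · exact (SplitExtension.semiconjBy_stable (E := E) ⟨b, rfl, .inr h⟩ : Commute _ _).symm
      · exact SplitExtension.semiconjBy_stable (E := E) ⟨a, rfl, .inl h⟩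
      · exact (commute_of (C := InvImage C some) h).map SplitExtension.base
  let r : T →* Raag C :=
    SplitExtension.lift (map some fun _ _ => id) (fun _ => .of none)
      (by
        rintro _ _ _ ⟨a, rfl, h | h⟩ <;> rw [map_of]
        · exact commute_of h
        · exact (commute_of h).symm)
      fun _ _ => False.elim
  have hri : r.comp i = .id (Raag C) := PresentedGroup.ext <| by
    rintro (_ | a)
    · exact (congrArg r (lift_of ..)).trans (SplitExtension.lift_stable ..)
    · exact (congrArg r (lift_of ..)).trans ((SplitExtension.lift_base ..).trans (map_of ..))
  exact hT.of_retract hri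

theorem torsionFree_of_finite {V : Type*} [Finite V] (C : V → V → Prop) :
    TorsionFree (Raag C) := by
  refine Finite.induction_empty_option (P := fun V => ∀ C : V → V → Prop, TorsionFree (Raag C))
    ?_ ?_ ?_ V C
  · intro V W e hV D
    have hri : (map e fun _ _ => id).comp
        (map (D := InvImage D e) e.symm fun a b h => by simpa [InvImage] using h) =
          .id (Raag D) := PresentedGroup.ext fun a => by
      rw [MonoidHom.comp_apply, map_of, map_of, e.apply_symm_apply, MonoidHom.id_apply]
    exact (hV _).of_retract hri
  · exact fun _ => torsionFree_of_forall_not_adj fun a => a.elim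
  · exact fun hV _ => torsionFree_option (hV _)

theorem exists_finset_mem_range_map {V : Type*} (C : V → V → Prop) (g : Raag C) :
    ∃ s : Finset V, g ∈ (map Subtype.val fun _ _ => id :
      Raag (InvImage C ((↑) : s → V)) →* Raag C).range := by
  let R (s : Finset V) : Subgroup (Raag C) :=
    (map (C := InvImage C ((↑) : s → V)) (↑) fun _ _ => id).range
  have hmono : Monotone R := by
    rintro s t hst _ ⟨w, rfl⟩
    exact ⟨map (Set.inclusion hst) (fun _ _ => id) w, map_map ..⟩
  have hgen (a : V) : .of a ∈ ⨆ s, R s :=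
    Subgroup.mem_iSup_of_mem {a} ⟨.of ⟨a, Finset.mem_singleton_self a⟩, map_of ..⟩
  exact (Subgroup.mem_iSup_of_directed hmono.directed_le).1 (PresentedGroup.generated_by _ _ hgen g)

theorem torsionFree {V : Type*} (C : V → V → Prop) : TorsionFree (Raag C) := by
  intro g hg
  obtain ⟨s, hs⟩ := exists_finset_mem_range_map C g
  exact (torsionFree_of_finite _).eq_one_of_mem_range (map_injective Subtype.val_injective C) hg hs

end Raag

/-! ### Thompson's group `F` -/

/-- Thompson's group `F`, by its infinite presentation `x i * x (j + 1) = x j * x i` for `i < j`. -/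
abbrev ThompsonF := WirtingerGroup fun i k j : ℕ => i < j ∧ k = j + 1

namespace ThompsonF

/-- The standard generators. -/
def x (n : ℕ) : ThompsonF := .of n

theorem semiconjBy_x {i j : ℕ} (h : i < j) : SemiconjBy (x i) (x (j + 1)) (x j) :=
  WirtingerGroup.semiconjBy_of ⟨h, rfl⟩

section lift

variable {M : Type*} [Group M] (f : ℕ → M)
  (hf : ∀ i j, i < j → SemiconjBy (f i) (f (j + 1)) (f j))

/-- The homomorphism out of `F` with prescribed values on the generators. -/
def lift : ThompsonF →* M :=
  WirtingerGroup.lift f <| by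
    rintro i _ j ⟨h, rfl⟩
    exact hf i j h

@[simp]
theorem lift_x (n : ℕ) : lift f hf (x n) = f n :=
  WirtingerGroup.lift_of ..

end lift

/-- The endomorphism `x n ↦ x (n + 1)`. -/
def shift : ThompsonF →* ThompsonF :=
  lift (fun n => x (n + 1)) fun _ _ h => semiconjBy_x (Nat.succ_lt_succ h)

@[simp]
theorem shift_x (n : ℕ) : shift (x n) = x (n + 1) :=
  lift_x ..

theorem semiconjBy_shift (g : ThompsonF) : SemiconjBy (x 0) (shift (shift g)) (shift g) := by
  have hconj : (MulAut.conj (x 0)).toMonoidHom.comp (shift.comp shift) = shift :=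
    PresentedGroup.ext fun n => mul_inv_eq_of_eq_mul <| by
      simpa only [shift_x] using (semiconjBy_x n.succ_pos).eq
  exact mul_inv_eq_iff_eq_mul.1 (DFunLike.congr_fun hconj g)

theorem semiconjBy_pow_shift (a : ℕ) (g : ThompsonF) :
    SemiconjBy (x 0 ^ a) (shift (shift^[a] g)) (shift g) := by
  induction a with
  | zero => exact .one_left _
  | succ a ih =>
    rw [pow_succ, Function.iterate_succ_apply']
    exact ih.mul_left (semiconjBy_shift _)

/-- The element represented by a word in the generators and their inverses. -/
def ofWord (L : List (ℕ × Bool)) : ThompsonF := PresentedGroup.mk _ (FreeGroup.mk L)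

theorem ofWord_surjective : Function.Surjective ofWord :=
  (PresentedGroup.mk_surjective _).comp Quot.mk_surjective

theorem ofWord_cons (s : ℕ × Bool) (L : List (ℕ × Bool)) :
    ofWord (s :: L) = ofWord [s] * ofWord L := by
  rw [ofWord, ofWord, ofWord, ← map_mul, FreeGroup.mul_mk, List.singleton_append]

theorem shift_ofWord (L : List (ℕ × Bool)) :
    shift (ofWord L) = ofWord (L.map (Prod.map Nat.succ id)) := by
  have hmap : shift.comp (PresentedGroup.mk _) =
      (PresentedGroup.mk _).comp (FreeGroup.map Nat.succ) :=
    FreeGroup.ext_hom _ _ shift_x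
  exact DFunLike.congr_fun hmap (FreeGroup.mk L)

theorem iterate_shift_ofWord_singleton (a n : ℕ) (ε : Bool) :
    shift^[a] (ofWord [(n, ε)]) = ofWord [(n + a, ε)] := by
  induction a with
  | zero => rfl
  | succ a ih =>
    rw [Function.iterate_succ_apply', ih, shift_ofWord]
    rfl

/-- Occurrences of `x 0` can be pushed to the left and those of its inverse to the right. -/
theorem exists_ofWord_eq (L : List (ℕ × Bool)) : ∃ a b L',
    ofWord L = x 0 ^ a * shift (ofWord L') * (x 0 ^ b)⁻¹ ∧
      L'.length + L.countP (·.1 = 0) = L.length := by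
  induction L with
  | nil => exact ⟨0, 0, [], by simp [ofWord, ← FreeGroup.one_eq_mk], rfl⟩
  | cons s L ih =>
    obtain ⟨a, b, L', h, hlen⟩ := ih
    rw [ofWord_cons, h]
    match s, a with
    | (0, false), 0 =>
      refine ⟨0, b + 1, L'.map (Prod.map Nat.succ id), ?_, by simp; omega⟩
      change (x 0)⁻¹ * _ = _
      rw [pow_zero, one_mul, one_mul, pow_succ, mul_inv_rev, ← shift_ofWord, ← mul_assoc,
        ← mul_assoc, (semiconjBy_shift _).inv_symm_left.eq]
    | (0, false), a + 1 =>
      refine ⟨a, b, L', ?_, by simp; omega⟩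
      change (x 0)⁻¹ * _ = _
      rw [pow_succ', mul_assoc, mul_assoc, inv_mul_cancel_left, mul_assoc]
    | (0, true), a =>
      refine ⟨a + 1, b, L', ?_, by simp; omega⟩
      change x 0 * _ = _
      simp only [pow_succ', mul_assoc]
    | (n + 1, ε), a =>
      refine ⟨a, b, (n + a, ε) :: L', ?_, by simp; omega⟩
      have hs : ofWord [(n + 1, ε)] = shift (ofWord [(n, ε)]) :=
        (shift_ofWord [(n, ε)]).symm
      rw [hs, ofWord_cons (n + a, ε), map_mul, ← iterate_shift_ofWord_singleton,
        ← mul_assoc (x 0 ^ a), (semiconjBy_pow_shift a _).eq]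
      simp only [mul_assoc]

/-- The order automorphism of `ℚ` fixing `(-∞, n]`, halving `[n, n + 2]` onto `[n, n + 1]`, and
translating `[n + 2, ∞)` by `-1`. -/
def contraction (n : ℕ) : ℚ ≃o ℚ :=
  StrictMono.orderIsoOfRightInverse (fun t => min t (max ((t + n) / 2) (t - 1)))
    (fun s t h => by
      dsimp only
      grind)
    (fun t => max t (min (2 * t - n) (t + 1)))
    (fun t => by grind)

theorem contraction_apply (n : ℕ) (t : ℚ) :
    contraction n t = min t (max ((t + n) / 2) (t - 1)) :=
  rfl

/-- The piecewise linear action of `F` on the rationals. -/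
def act : ThompsonF →* (ℚ ≃o ℚ) :=
  lift contraction fun i j hij => by
    ext t
    have hij : (i : ℚ) + 1 ≤ j := by exact_mod_cast hij
    simp only [RelIso.mul_apply, contraction_apply]
    push_cast
    grind

@[simp]
theorem act_x (n : ℕ) : act (x n) = contraction n :=
  lift_x ..

theorem act_shift (g : ThompsonF) (t : ℚ) : act (shift g) (t + 1) = act g t + 1 := by
  have hconj : act.comp shift = (MulAut.conj (OrderIso.addRight 1)).toMonoidHom.comp act :=
    PresentedGroup.ext fun n => eq_mul_inv_of_mul_eq <| by
      change act (shift (x n)) * _ = _ * act (x n)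
      ext t
      simp only [shift_x, act_x, RelIso.mul_apply, contraction_apply, OrderIso.addRight_apply]
      push_cast
      grind
  exact DFunLike.congr_fun (eq_mul_inv_iff_mul_eq.1 (DFunLike.congr_fun hconj g)) t

theorem act_zero (g : ThompsonF) : act g 0 = 0 :=
  PresentedGroup.generated_by _ ((MulAction.stabilizer (ℚ ≃o ℚ) (0 : ℚ)).comap act)
    (fun n => by
      change act (x n) 0 = 0
      rw [act_x, contraction_apply]
      have : (0 : ℚ) ≤ n := n.cast_nonneg
      grind) g

theorem act_shift_one (g : ThompsonF) : act (shift g) 1 = 1 := by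
  simpa only [zero_add, act_zero] using act_shift g 0

theorem act_x_zero_pow_one (a : ℕ) : act (x 0 ^ a) 1 = (1 / 2) ^ a := by
  induction a with
  | zero => simp
  | succ a ih =>
    have hpos : (0 : ℚ) ≤ (1 / 2) ^ a := by positivity
    have hle : (1 / 2 : ℚ) ^ a ≤ 1 := pow_le_one₀ (by norm_num) (by norm_num)
    rw [pow_succ', map_mul, RelIso.mul_apply, ih, act_x, contraction_apply, Nat.cast_zero]
    grind

theorem act_eq_one_of_act_shift_eq_one {g : ThompsonF} (h : act (shift g) = 1) : act g = 1 := by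
  ext t
  simpa [h] using (act_shift g t).symm

theorem eq_and_act_eq_one {a b : ℕ} {g : ThompsonF}
    (h : act (x 0 ^ a * shift g * (x 0 ^ b)⁻¹) = 1) : a = b ∧ act g = 1 := by
  have hmul : act (x 0 ^ a * shift g) = act (x 0 ^ b) := by
    rwa [map_mul act (_ * _), map_inv, mul_inv_eq_one] at h
  have hab : a = b := by
    have h1 := DFunLike.congr_fun hmul 1
    rw [map_mul, RelIso.mul_apply, act_shift_one, act_x_zero_pow_one, act_x_zero_pow_one] at h1
    exact pow_right_injective₀ (by norm_num) (by norm_num) h1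
  subst hab
  rw [map_mul, mul_eq_left] at hmul
  exact ⟨rfl, act_eq_one_of_act_shift_eq_one hmul⟩

theorem ofWord_eq_one (L : List (ℕ × Bool)) (h : act (ofWord L) = 1) : ofWord L = 1 := by
  by_cases hzero : ∃ s ∈ L, s.1 = 0
  · obtain ⟨a, b, L', hL, hlen⟩ := exists_ofWord_eq L
    have hcount : 0 < L.countP (·.1 = 0) := List.countP_pos_iff.2 (by simpa using hzero)
    have : L'.length < L.length := by omega
    obtain ⟨rfl, hL'⟩ := eq_and_act_eq_one (hL ▸ h)
    rw [hL, ofWord_eq_one L' hL', map_one, mul_one, mul_inv_cancel]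
  · obtain ⟨L', hL⟩ : ∃ L' : List (ℕ × Bool), L = L'.map (Prod.map Nat.succ id) := by
      refine ⟨L.map (Prod.map Nat.pred id), ?_⟩
      rw [List.map_map]
      refine L.map_id.symm.trans (List.map_congr_left fun s hs => ?_)
      exact Prod.ext (Nat.succ_pred fun h0 => hzero ⟨s, hs, h0⟩).symm rfl
    rcases eq_or_ne L [] with rfl | hne
    · rfl
    have hlen : L'.length = L.length := by rw [hL, List.length_map]
    have : (L'.map Prod.fst).sum < (L.map Prod.fst).sum := by
      have hpos : 0 < L'.length := hlen ▸ List.length_pos_iff.2 hne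
      simpa [hL, Function.comp_def, List.sum_map_add] using hpos
    have hL' : ofWord L = shift (ofWord L') := by rw [hL, shift_ofWord]
    rw [hL', ofWord_eq_one L' (act_eq_one_of_act_shift_eq_one (hL' ▸ h)), map_one]
termination_by (L.length, (L.map Prod.fst).sum)
decreasing_by
  · exact .left _ _ ‹_›
  · exact hlen ▸ .right _ ‹_›

theorem act_injective : Function.Injective act := by
  rw [injective_iff_map_eq_one]
  intro g hg
  obtain ⟨L, rfl⟩ := ofWord_surjective g
  exact ofWord_eq_one L hg

theorem torsionFree : TorsionFree ThompsonF :=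
  (TorsionFree.orderIso ℚ).of_injective act_injective

end ThompsonF

/-! ### Coloured Thompson groups -/

/-- A coloured version of Thompson's group `F`. Its generators are those of `F` decorated by a
colour; a generator of colour in `ι` conjugates the later generators of every colour, while those of
colour in `κ` occur only passively. -/
abbrev ColoredThompson (ι κ : Type*) :=
  WirtingerGroup fun a k j : (ι ⊕ κ) × ℕ =>
    a.1.isLeft ∧ a.2 < j.2 ∧ k = (j.1, j.2 + 1)

namespace ColoredThompson

variable {ι κ : Type*}

/-- The generator of colour `c` and index `n`. -/
def gen (c : ι ⊕ κ) (n : ℕ) : ColoredThompson ι κ := .of (c, n)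

theorem semiconjBy_gen (i : ι) (c : ι ⊕ κ) {m n : ℕ} (h : m < n) :
    SemiconjBy (gen (.inl i) m) (gen c (n + 1)) (gen c n) :=
  WirtingerGroup.semiconjBy_of ⟨rfl, h, rfl⟩

section lift

variable {M : Type*} [Group M] (f : ι ⊕ κ → ℕ → M)
  (hf : ∀ i c m n, m < n → SemiconjBy (f (.inl i) m) (f c (n + 1)) (f c n))

/-- The homomorphism out of the coloured Thompson group with prescribed values on the
generators. -/
def lift : ColoredThompson ι κ →* M :=
  WirtingerGroup.lift (fun a => f a.1 a.2) <| by
    rintro ⟨i | _, m⟩ _ ⟨c, n⟩ ⟨hi, h, rfl⟩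
    · exact hf i c m n h
    · contradiction

@[simp]
theorem lift_gen (c : ι ⊕ κ) (n : ℕ) : lift f hf (gen c n) = f c n :=
  WirtingerGroup.lift_of ..

end lift

/-- The prescribed action of Thompson's group `F` on the stable letters of the split extension of
which the coloured Thompson group is a retract. -/
inductive StableAction (ι κ : Type*) : ThompsonF → (ι ⊕ κ) × ℕ → (ι ⊕ κ) × ℕ → Prop
  | lower (c : ι ⊕ κ) {m n : ℕ} (h : m < n) :
    StableAction ι κ (ThompsonF.x m) (c, n + 1) (c, n)
  | fix (i : ι) {m n : ℕ} (h : m < n) :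
    StableAction ι κ (ThompsonF.x n) (.inl i, m) (.inl i, m)

/-- The commutation relations prescribed between these stable letters. -/
def StableCommute (ι κ : Type*) (j j' : (ι ⊕ κ) × ℕ) : Prop :=
  j.1.isLeft ∧ j.2 < j'.2

/-- The split extension of Thompson's group `F` of which the coloured Thompson group is a
retract. -/
abbrev Splitting (ι κ : Type*) := SplitExtension (StableAction ι κ) (StableCommute ι κ)

/-- Splits an active generator into a stable letter and the underlying generator of `F`. -/
def toSplitting : ColoredThompson ι κ →* Splitting ι κ :=
  lift
    (fun c n => SplitExtension.stable (c, n) *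
      c.elim (fun _ => SplitExtension.base (ThompsonF.x n)) fun _ => 1) <| by
    intro i c m n h
    have hstable := SplitExtension.semiconjBy_stable (C := StableCommute ι κ)
      (StableAction.lower c h)
    have hcomm : Commute (SplitExtension.stable (.inl i, m) : Splitting ι κ) (.stable (c, n)) :=
      SplitExtension.commute_stable ⟨rfl, h⟩
    rcases c with j | k
    · have hbase := (ThompsonF.semiconjBy_x h).map (SplitExtension.base : _ →* Splitting ι κ)
      have hfix : Commute (SplitExtension.base (ThompsonF.x n) : Splitting ι κ)
          (.stable (.inl i, m)) := SplitExtension.semiconjBy_stable (StableAction.fix i h)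
      exact SemiconjBy.mul_left (hcomm.mul_right hfix.symm) (hstable.mul_right hbase)
    · simpa only [Sum.elim_inl, Sum.elim_inr, mul_one] using SemiconjBy.mul_left hcomm hstable

theorem commute_gen_mul_inv_gen (i₀ i : ι) (c : ι ⊕ κ) {m n : ℕ} (h : m < n) :
    Commute (gen (.inl i) m * (gen (.inl i₀) m)⁻¹) (gen c n) :=
  (semiconjBy_gen i c h).mul_left (semiconjBy_gen i₀ c h).inv_symm_left

/-- The retraction of `toSplitting` sending the generators of `F` to those of colour `i₀`. -/
def ofSplitting (i₀ : ι) : Splitting ι κ →* ColoredThompson ι κ :=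
  SplitExtension.lift (ThompsonF.lift (gen (.inl i₀)) fun _ _ => semiconjBy_gen i₀ (.inl i₀))
    (fun j => gen j.1 j.2 * j.1.elim (fun _ => (gen (.inl i₀) j.2)⁻¹) fun _ => 1)
    (by
      rintro _ _ _ (⟨c, h⟩ | ⟨i, h⟩) <;> rw [ThompsonF.lift_x]
      · rcases c with i | k
        · exact (semiconjBy_gen _ _ h).mul_right (semiconjBy_gen _ _ h).inv_right
        · exact (semiconjBy_gen _ _ h).mul_right (.one_right _)
      · exact (commute_gen_mul_inv_gen i₀ i _ h).symm)
    (by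
      rintro ⟨i | _, m⟩ ⟨c, n⟩ ⟨hi, h⟩
      · rcases c with j | k
        · exact (commute_gen_mul_inv_gen i₀ i _ h).mul_right
            (commute_gen_mul_inv_gen i₀ i _ h).inv_right
        · exact (commute_gen_mul_inv_gen i₀ i _ h).mul_right (.one_right _)
      · contradiction)

theorem torsionFree [hι : Nonempty ι] : TorsionFree (ColoredThompson ι κ) := by
  obtain ⟨i₀⟩ := hι
  have hri : (ofSplitting i₀).comp toSplitting = .id (ColoredThompson ι κ) :=
    PresentedGroup.ext <| by
      rintro ⟨i | k, n⟩
      · change ofSplitting i₀ (toSplitting (gen (.inl i) n)) = gen (.inl i) n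
        simp [ofSplitting, toSplitting]
      · change ofSplitting i₀ (toSplitting (gen (.inr k) n)) = gen (.inr k) n
        simp [ofSplitting, toSplitting]
  exact (SplitExtension.torsionFree ThompsonF.torsionFree (Raag.torsionFree _)).of_retract hri

end ColoredThompson

/-! ### `VF` as a retract of a coloured Thompson group -/

namespace VF

open Letter

/-- Naturality of the family `N u`, thought of as labels of a passage from the word `a :: u` to the
word `b :: u`, under rewriting of the letters of `u`. Here `e s t q a` is the label of the rewriting
`s → t` with right context `q` in a word with first letter `a`. -/
def IsNatural {M : Type*} [Mul M] (e : Letter → Tgt → Word → Letter → M) (a b : Letter)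
    (N : Word → M) : Prop :=
  ∀ p s t q, e s t q a * N (p ++ tw t ++ q) = N (p ++ [s] ++ q) * e s t q b

namespace IsNatural

variable {M : Type*} [Group M] {e : Letter → Tgt → Word → Letter → M} {a b c : Letter}
  {N N' : Word → M}

theorem one : IsNatural e a a 1 := by
  intro p s t q
  rw [Pi.one_apply, Pi.one_apply, mul_one, one_mul]

theorem mul (hN : IsNatural e a b N) (hN' : IsNatural e b c N') : IsNatural e a c (N * N') := by
  intro p s t q
  rw [Pi.mul_apply, Pi.mul_apply, ← mul_assoc, hN, mul_assoc, hN', mul_assoc]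

theorem inv (hN : IsNatural e a b N) : IsNatural e b a N⁻¹ := by
  intro p s t q
  rw [Pi.inv_apply, Pi.inv_apply, mul_inv_eq_iff_eq_mul, mul_assoc, hN, inv_mul_cancel_left]

theorem comp_cons (hN : IsNatural e a b N) (l : Letter) : IsNatural e a b fun u => N (l :: u) :=
  fun p => hN (l :: p)

end IsNatural

section lift

variable {M : Type*} [Group M] (e : Letter → Tgt → Word → Letter → M) (h : Letter → Tgt → Word → M)

/-- The values of the generators of `VF` for the labels `e` of the edges away from the first letter
and `h` of those at the first letter. -/
def genValue : Gen → M
  | .fam1 .vv => h v (v, v) []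
  | .fam1 .vx => h v (v, x) []
  | .fam1 .xv => h v (x, v) []
  | .fam2 a s t u => e s t u a
  | .fam3 .xvv u => h x (v, v) u
  | .fam3 .xvx u => h x (v, x) u
  | .fam3 .vxx u => h v (x, x) u
  | .fam3 .vxv u => h v (x, v) u

variable {e h} (he : ∀ s t a, IsNatural e a a fun u => e s t u a)
  (hh : ∀ s t, IsNatural e s t.1 (h s t))

/-- The homomorphism out of `VF` given by natural edge labels. -/
def lift : VF →* M :=
  PresentedGroup.toGroup (f := genValue e h) <| by
    intro r hr
    induction (show VFRel r from hr) <;>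
      simp only [X, map_mul, map_inv, FreeGroup.lift_apply_of] <;> rw [mul_inv_eq_one]
    case r12 a s₁ s₂ t₁ t₂ p q => exact (he s₁ t₁ a p s₂ t₂ q).symm
    case r3 s t p q => exact hh x (v, v) p s t q
    case r4 s t p q => exact hh x (v, x) p s t q
    case r5 s t p q => exact hh v (x, x) p s t q
    case r6 s t p q => exact hh v (x, v) p s t q

theorem lift_of (g : Gen) : lift he hh (.of g) = genValue e h g :=
  PresentedGroup.toGroup.of _

end lift

end VF

/-- The coloured Thompson group of which `VF` is a retract. Active colours stand for the edges away
from the first letter, passive ones for the edges at the first letter; the index is the length of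
the right context. -/
abbrev Collapse := ColoredThompson (Letter × Tgt) (Letter × Tgt)

namespace Collapse

open Letter

/-- The label of the edge `s → t` away from the first letter, with right context of length `n`. -/
def inner (s : Letter) (t : Tgt) (n : ℕ) : Collapse := .gen (.inl (s, t)) n

/-- The label of the edge `s → t` at the first letter, with right context of length `n`. -/
def head (s : Letter) (t : Tgt) (n : ℕ) : Collapse := .gen (.inr (s, t)) n

/-- The product of the labels along the path of the spanning tree from the base word `x` to
`a :: u`. The tree edges are `x → ab`, `v → xx`, and `a → ab` with nonempty right context. -/
def treePath : Letter → Word → Collapse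
  | x, [] => 1
  | v, [] => head x (x, x) 0 * (head v (x, x) 0)⁻¹
  | a, [b] => head x (a, b) 0
  | a, b :: c :: u => treePath a (c :: u) * head a (a, b) (u.length + 1)

theorem treePath_cons (a b : Letter) {w : Word} (hw : w ≠ []) :
    treePath a (b :: w) = treePath a w * head a (a, b) w.length := by
  obtain ⟨c, u, rfl⟩ := List.exists_cons_of_ne_nil hw
  cases a <;> rfl

/-- Label of the edge `s → t` away from the first letter `a`, with the spanning tree contracted. -/
def innerLabel (s : Letter) (t : Tgt) (u : Word) (a : Letter) : Collapse :=
  treePath a ([s] ++ u) * inner s t u.length * (treePath a (tw t ++ u))⁻¹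

/-- Label of the edge `s → t` at the first letter, with the spanning tree contracted. -/
def headLabel (s : Letter) (t : Tgt) (u : Word) : Collapse :=
  treePath s u * head s t u.length * (treePath t.1 (t.2 :: u))⁻¹

theorem semiconjBy_gen_of_append (s : Letter) (t : Tgt) (c : (Letter × Tgt) ⊕ (Letter × Tgt))
    (p q : Word) :
    SemiconjBy (inner s t q.length) (.gen c (p ++ tw t ++ q).length)
      (.gen c (p ++ [s] ++ q).length) := by
  have hlen : (p ++ tw t ++ q).length = (p ++ [s] ++ q).length + 1 := by
    simp only [tw, List.length_append, List.length_cons, List.length_nil]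
    omega
  rw [hlen]
  exact ColoredThompson.semiconjBy_gen _ _ (by simp; omega)

theorem innerLabel_eq (s : Letter) (t : Tgt) (a : Letter) (p q : Word) :
    innerLabel s t q a =
      treePath a (p ++ [s] ++ q) * inner s t q.length * (treePath a (p ++ tw t ++ q))⁻¹ := by
  induction p with
  | nil => rfl
  | cons b p ih =>
    have hconj : head a (a, b) (p ++ [s] ++ q).length * inner s t q.length *
        (head a (a, b) (p ++ tw t ++ q).length)⁻¹ = inner s t q.length :=
      mul_inv_eq_of_eq_mul (semiconjBy_gen_of_append s t _ p q).eq.symm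
    calc
      _ = treePath a (p ++ [s] ++ q) * (head a (a, b) (p ++ [s] ++ q).length *
            inner s t q.length * (head a (a, b) (p ++ tw t ++ q).length)⁻¹) *
            (treePath a (p ++ tw t ++ q))⁻¹ := by rw [ih, hconj]
      _ = _ := by
        simp only [List.cons_append]
        rw [treePath_cons a b (by simp), treePath_cons a b (by simp [tw]), mul_inv_rev]
        simp only [mul_assoc]

theorem isNatural_contract (c : (Letter × Tgt) ⊕ (Letter × Tgt)) (a b : Letter)
    (r r' : Word) :
    VF.IsNatural innerLabel a b fun u =>
      treePath a (r ++ u) * .gen c u.length * (treePath b (r' ++ u))⁻¹ := by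
  intro p s t q
  have hconj := (semiconjBy_gen_of_append s t c p q).eq
  rw [innerLabel_eq s t a (r ++ p), innerLabel_eq s t b (r' ++ p)]
  simp only [List.append_assoc] at hconj ⊢
  calc
    _ = treePath a (r ++ (p ++ ([s] ++ q))) *
          (inner s t q.length * .gen c (p ++ (tw t ++ q)).length) *
          (treePath b (r' ++ (p ++ (tw t ++ q))))⁻¹ := by group
    _ = _ := by
      rw [hconj]
      group

theorem isNatural_innerLabel (s : Letter) (t : Tgt) (a : Letter) :
    VF.IsNatural innerLabel a a fun u => innerLabel s t u a :=
  isNatural_contract (.inl (s, t)) a a [s] (tw t)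

theorem isNatural_headLabel (s : Letter) (t : Tgt) :
    VF.IsNatural innerLabel s t.1 (headLabel s t) :=
  isNatural_contract (.inr (s, t)) s t.1 [] [t.2]

end Collapse

namespace VF

open Letter

/-- The embedding of `VF` as a retract. -/
def toCollapse : VF →* Collapse :=
  lift Collapse.isNatural_innerLabel Collapse.isNatural_headLabel

section Words

variable {u w w' w'' : Word} {P Q : Letter → VF} {N : Word → VF} {m n : ℕ}

/-- The generator of `VF` that rewrites `s → t` with right context `u`, as a function of the first
letter of the word. -/
def edge (s : Letter) (t : Tgt) (u : Word) : Letter → VF :=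
  fun a => .of (.fam2 a s t u)

/-- The generator of `VF` that rewrites the first letter `s → t` with right context `u`; it is `1`
for the edges of the spanning tree, which carry no generator. -/
def headEdge : Letter → Tgt → Word → VF
  | v, (v, v), [] => .of (.fam1 .vv)
  | v, (v, x), [] => .of (.fam1 .vx)
  | v, (x, v), [] => .of (.fam1 .xv)
  | _, _, [] => 1
  | x, (v, v), b :: u => .of (.fam3 .xvv ⟨b :: u, by simp⟩)
  | x, (v, x), b :: u => .of (.fam3 .xvx ⟨b :: u, by simp⟩)
  | v, (x, x), b :: u => .of (.fam3 .vxx ⟨b :: u, by simp⟩)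
  | v, (x, v), b :: u => .of (.fam3 .vxv ⟨b :: u, by simp⟩)
  | x, (x, _), _ :: _ => 1
  | v, (v, _), _ :: _ => 1

theorem headEdge_nil (a b : Letter) : headEdge x (a, b) [] = 1 := by
  cases a <;> cases b <;> rfl

theorem headEdge_self (a b : Letter) (hu : u ≠ []) : headEdge a (a, b) u = 1 := by
  obtain ⟨c, u, rfl⟩ := List.exists_cons_of_ne_nil hu
  cases a <;> cases b <;> rfl

theorem of_mul_of_eq {g₁ g₂ g₃ g₄ : Gen} (h : VFRel (X g₁ * X g₂ * (X g₃ * X g₄)⁻¹)) :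
    (.of g₁ * .of g₂ : VF) = .of g₃ * .of g₄ :=
  PresentedGroup.mk_eq_mk_of_mul_inv_mem (rels := VFrels) (x := X g₁ * X g₂) (y := X g₃ * X g₄) h

theorem isNatural_edge (s : Letter) (t : Tgt) (a : Letter) :
    IsNatural edge a a fun u => edge s t u a :=
  fun p s' t' q => (of_mul_of_eq (.r12 a s s' t t' p q)).symm

theorem isNatural_headEdge (s : Letter) (t : Tgt) : IsNatural edge s t.1 (headEdge s t) := by
  intro p s' t' q
  match s, t, p with
  | x, (x, c), p | v, (v, c), p =>
    rw [headEdge_self _ _ (by simp [tw]), headEdge_self _ _ (by simp), mul_one, one_mul]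
  | x, (v, v), [] => exact of_mul_of_eq (.r3 s' t' [] q)
  | x, (v, v), b :: p => exact of_mul_of_eq (.r3 s' t' (b :: p) q)
  | x, (v, x), [] => exact of_mul_of_eq (.r4 s' t' [] q)
  | x, (v, x), b :: p => exact of_mul_of_eq (.r4 s' t' (b :: p) q)
  | v, (x, x), [] => exact of_mul_of_eq (.r5 s' t' [] q)
  | v, (x, x), b :: p => exact of_mul_of_eq (.r5 s' t' (b :: p) q)
  | v, (x, v), [] => exact of_mul_of_eq (.r6 s' t' [] q)
  | v, (x, v), b :: p => exact of_mul_of_eq (.r6 s' t' (b :: p) q)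

/-- Abstract form of being, for every first letter `a` at once, the label `P a` of a path from
`a :: w` to `a :: w'` that rewrites only letters other than the first: every natural family
satisfies naturality along `P`, with arbitrary left context. -/
def IsInnerPath (w w' : Word) (P : Letter → VF) : Prop :=
  ∀ a b N, IsNatural edge a b N → ∀ p, N (p ++ w) * P b = P a * N (p ++ w')

namespace IsInnerPath

theorem one : IsInnerPath w w 1 := by
  intro a b N _ p
  rw [Pi.one_apply, Pi.one_apply, mul_one, one_mul]

theorem mul (hP : IsInnerPath w w' P) (hQ : IsInnerPath w' w'' Q) : IsInnerPath w w'' (P * Q) := by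
  intro a b N hN p
  rw [Pi.mul_apply, Pi.mul_apply, ← mul_assoc, hP a b N hN, mul_assoc, hQ a b N hN, mul_assoc]

theorem inv (hP : IsInnerPath w w' P) : IsInnerPath w' w P⁻¹ := by
  intro a b N hN p
  rw [Pi.inv_apply, Pi.inv_apply, mul_inv_eq_iff_eq_mul, mul_assoc, hP a b N hN,
    inv_mul_cancel_left]

theorem append_left (hP : IsInnerPath w w' P) (r : Word) : IsInnerPath (r ++ w) (r ++ w') P := by
  intro a b N hN p
  simpa only [List.append_assoc] using hP a b N hN (p ++ r)

end IsInnerPath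

theorem isInnerPath_edge (s : Letter) (t : Tgt) (u : Word) :
    IsInnerPath (s :: u) (t.1 :: t.2 :: u) (edge s t u) := by
  intro a b N hN p
  simpa only [tw, List.append_assoc, List.cons_append, List.nil_append] using (hN p s t u).symm

/-- The label of the path turning the letter `b` with right context `u` into `x`; for `b = v` it is
the path `v → xx ← x`. -/
def whiten : Letter → Word → Letter → VF
  | x, _ => 1
  | v, u => edge v (x, x) u * (edge x (x, x) u)⁻¹

theorem isInnerPath_whiten : ∀ (b : Letter) (u : Word), IsInnerPath (b :: u) (x :: u) (whiten b u)
  | x, _ => .one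
  | v, u => (isInnerPath_edge v (x, x) u).mul (isInnerPath_edge x (x, x) u).inv

theorem isNatural_whiten (a : Letter) :
    ∀ b : Letter, IsNatural edge a a fun u => whiten b u a
  | x => .one
  | v => (isNatural_edge v (x, x) a).mul (isNatural_edge x (x, x) a).inv

/-- The word `xⁿ`. -/
def xs (n : ℕ) : Word := List.replicate n x

theorem xs_append (m n : ℕ) : xs m ++ xs n = xs (m + n) := List.replicate_append_replicate

/-- The label of the path turning all letters of a word into `x`, from right to left. -/
def whitenWord : Word → Letter → VF
  | [] => 1
  | b :: u => whitenWord u * whiten b (xs u.length)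

theorem isInnerPath_whitenWord : ∀ u : Word, IsInnerPath u (xs u.length) (whitenWord u)
  | [] => .one
  | b :: u => ((isInnerPath_whitenWord u).append_left [b]).mul (isInnerPath_whiten b _)

/-- The label of the passage from first letter `a` to first letter `x`, with right context `u`. -/
def whitenHead : Letter → Word → VF
  | x => 1
  | v => headEdge v (x, x)

theorem isNatural_whitenHead : ∀ a : Letter, IsNatural edge a x (whitenHead a)
  | x => .one
  | v => isNatural_headEdge v (x, x)

/-- The edge `s → t` away from the first letter, whitened to a path from `x :: u` to
`x :: x :: u`. -/
def innerLoop (s : Letter) (t : Tgt) (u : Word) : Letter → VF :=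
  (whiten s u)⁻¹ * edge s t u * whiten t.2 u * whiten t.1 (x :: u)

theorem isInnerPath_innerLoop (s : Letter) (t : Tgt) (u : Word) :
    IsInnerPath (x :: u) (x :: x :: u) (innerLoop s t u) :=
  (((isInnerPath_whiten s u).inv.mul (isInnerPath_edge s t u)).mul
    ((isInnerPath_whiten t.2 u).append_left [t.1])).mul (isInnerPath_whiten t.1 (x :: u))

theorem isNatural_innerLoop (s : Letter) (t : Tgt) (a : Letter) :
    IsNatural edge a a fun u => innerLoop s t u a :=
  (((isNatural_whiten a s).inv.mul (isNatural_edge s t a)).mul (isNatural_whiten a t.2)).mul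
    ((isNatural_whiten a t.1).comp_cons x)

/-- The edge `s → t` at the first letter, whitened to a path from `x :: u` to `x :: x :: u`. -/
def headLoop (s : Letter) (t : Tgt) (u : Word) : VF :=
  (whitenHead s u)⁻¹ * headEdge s t u * whiten t.2 u t.1 * whitenHead t.1 (x :: u)

theorem isNatural_headLoop (s : Letter) (t : Tgt) : IsNatural edge x x (headLoop s t) :=
  (((isNatural_whitenHead s).inv.mul (isNatural_headEdge s t)).mul (isNatural_whiten t.1 t.2)).mul
    ((isNatural_whitenHead t.1).comp_cons x)

theorem semiconjBy_innerLoop (hN : IsNatural edge x x N) (s : Letter) (t : Tgt) (h : m < n) :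
    SemiconjBy (innerLoop s t (xs m) x) (N (xs (n + 1))) (N (xs n)) := by
  obtain ⟨k, rfl⟩ := Nat.exists_eq_add_of_lt h
  have hloop := isInnerPath_innerLoop s t (xs m) x x N hN (xs k)
  change N (xs k ++ xs (m + 1)) * _ = _ * N (xs k ++ xs (m + 1 + 1)) at hloop
  rw [xs_append, xs_append] at hloop
  rw [show m + k + 1 = k + (m + 1) by omega]
  exact hloop.symm

/-- The retraction of `toCollapse`, sending every label to the loop based at words `xⁿ`. -/
def ofCollapse : Collapse →* VF :=
  ColoredThompson.lift
    (fun c n => c.elim (fun st => innerLoop st.1 st.2 (xs n) x) fun st => headLoop st.1 st.2 (xs n))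
    (by
      rintro ⟨s, t⟩ (⟨s', t'⟩ | ⟨s', t'⟩) m n h
      · exact semiconjBy_innerLoop (isNatural_innerLoop s' t' x) s t h
      · exact semiconjBy_innerLoop (isNatural_headLoop s' t') s t h)

theorem ofCollapse_inner (s : Letter) (t : Tgt) (n : ℕ) :
    ofCollapse (Collapse.inner s t n) = innerLoop s t (xs n) x :=
  ColoredThompson.lift_gen ..

theorem ofCollapse_head (s : Letter) (t : Tgt) (n : ℕ) :
    ofCollapse (Collapse.head s t n) = headLoop s t (xs n) :=
  ColoredThompson.lift_gen ..

/-- The label of the path from `a :: u` to a word `xⁿ` which first whitens `u` and then `a`. -/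
def potential (a : Letter) (u : Word) : VF := whitenWord u a * whitenHead a (xs u.length)

theorem potential_mul_headLoop (s : Letter) (t : Tgt) (u : Word) :
    potential s u * headLoop s t (xs u.length) = headEdge s t u * potential t.1 (t.2 :: u) := by
  have hwhiten : headEdge s t u * whitenWord u t.1 = whitenWord u s * headEdge s t (xs u.length) :=
    isInnerPath_whitenWord u s t.1 _ (isNatural_headEdge s t) []
  calc
    potential s u * headLoop s t (xs u.length)
      = whitenWord u s * headEdge s t (xs u.length) *
          whiten t.2 (xs u.length) t.1 * whitenHead t.1 (xs (u.length + 1)) := by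
        simp only [potential, headLoop, mul_assoc, mul_inv_cancel_left]
        rfl
    _ = headEdge s t u * (whitenWord u t.1 * whiten t.2 (xs u.length) t.1 *
          whitenHead t.1 (xs (u.length + 1))) := by
        rw [← hwhiten]
        simp only [mul_assoc]

theorem potential_mul_innerLoop (a s : Letter) (t : Tgt) (u : Word) :
    potential a (s :: u) * innerLoop s t (xs u.length) x =
      edge s t u a * potential a (t.1 :: t.2 :: u) := by
  have hwhiten : edge s t u a * whitenWord u a = whitenWord u a * edge s t (xs u.length) a :=
    isInnerPath_whitenWord u a a _ (isNatural_edge s t a) []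
  have hhead : whitenHead a (xs (u.length + 1)) * innerLoop s t (xs u.length) x =
      innerLoop s t (xs u.length) a * whitenHead a (xs (u.length + 2)) :=
    isInnerPath_innerLoop s t (xs u.length) a x _ (isNatural_whitenHead a) []
  calc
    potential a (s :: u) * innerLoop s t (xs u.length) x
      = whitenWord u a * whiten s (xs u.length) a *
          (innerLoop s t (xs u.length) a * whitenHead a (xs (u.length + 2))) := by
        rw [← hhead, ← mul_assoc]
        rfl
    _ = whitenWord u a * edge s t (xs u.length) a * whiten t.2 (xs u.length) a *
          whiten t.1 (xs (u.length + 1)) a * whitenHead a (xs (u.length + 2)) := by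
        simp only [innerLoop, Pi.mul_apply, Pi.inv_apply, mul_assoc, mul_inv_cancel_left]
        rfl
    _ = edge s t u a * (whitenWord u a * whiten t.2 (xs u.length) a *
          whiten t.1 (xs (u.length + 1)) a * whitenHead a (xs (u.length + 2))) := by
        rw [← hwhiten]
        simp only [mul_assoc]

theorem potential_nil (a : Letter) : potential a [] = 1 := by
  cases a <;> rfl

theorem ofCollapse_treePath (a : Letter) (u : Word) :
    ofCollapse (Collapse.treePath a u) = potential a u := by
  induction u with
  | nil =>
    rw [potential_nil]
    cases a with
    | x => exact map_one _
    | v =>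
      rw [Collapse.treePath, map_mul, map_inv, ofCollapse_head, ofCollapse_head]
      simp [headLoop, whitenHead, whiten, xs, headEdge]
  | cons b u ih =>
    rcases eq_or_ne u [] with rfl | hu
    · have hedge := potential_mul_headLoop x (a, b) []
      rw [headEdge_nil, potential_nil, one_mul, one_mul] at hedge
      rw [Collapse.treePath, ofCollapse_head]
      exact hedge
    · rw [Collapse.treePath_cons a b hu, map_mul, ih, ofCollapse_head, potential_mul_headLoop,
        headEdge_self a b hu, one_mul]

theorem ofCollapse_innerLabel (s : Letter) (t : Tgt) (u : Word) (a : Letter) :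
    ofCollapse (Collapse.innerLabel s t u a) = edge s t u a := by
  rw [Collapse.innerLabel, map_mul, map_mul, map_inv, ofCollapse_treePath, ofCollapse_treePath,
    ofCollapse_inner]
  exact mul_inv_eq_of_eq_mul (potential_mul_innerLoop a s t u)

theorem ofCollapse_headLabel (s : Letter) (t : Tgt) (u : Word) :
    ofCollapse (Collapse.headLabel s t u) = headEdge s t u := by
  rw [Collapse.headLabel, map_mul, map_mul, map_inv, ofCollapse_treePath, ofCollapse_treePath,
    ofCollapse_head]
  exact mul_inv_eq_of_eq_mul (potential_mul_headLoop s t u)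

end Words

theorem genValue_edge_headEdge : ∀ g : Gen, genValue edge headEdge g = .of g
  | .fam1 .vv | .fam1 .vx | .fam1 .xv | .fam2 _ _ _ _
  | .fam3 .xvv ⟨_ :: _, _⟩ | .fam3 .xvx ⟨_ :: _, _⟩
  | .fam3 .vxx ⟨_ :: _, _⟩ | .fam3 .vxv ⟨_ :: _, _⟩ => rfl
  | .fam3 _ ⟨[], h⟩ => absurd rfl h

theorem map_genValue {M M' : Type*} [Group M] [Group M'] (f : M →* M')
    (e : Letter → Tgt → Word → Letter → M) (h : Letter → Tgt → Word → M) (g : Gen) :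
    f (genValue e h g) = genValue (fun s t u a => f (e s t u a)) (fun s t u => f (h s t u)) g := by
  unfold genValue
  split <;> rfl

theorem ofCollapse_comp_toCollapse : ofCollapse.comp toCollapse = .id VF := by
  refine PresentedGroup.ext fun g => ?_
  rw [MonoidHom.comp_apply, toCollapse, lift_of, map_genValue]
  simp only [ofCollapse_innerLabel, ofCollapse_headLabel]
  exact genValue_edge_headEdge g

theorem torsionFree : TorsionFree VF :=
  (ColoredThompson.torsionFree (hι := ⟨(x, x, x)⟩)).of_retract ofCollapse_comp_toCollapse

end VF

/-- VF is torsion-free: every element with gⁿ = 1 for some n ≥ 1 is trivial. -/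
theorem VF_torsion_free (g : VF) (n : ℕ) (hn : 1 ≤ n) (h : g ^ n = 1) : g = 1 :=
  VF.torsionFree g (isOfFinOrder_iff_pow_eq_one.2 ⟨n, hn, h⟩)
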